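/- Assume λ ∈ ℂ \ ℤ or λ = −1. Then F̃_{−λ/z} is irreducible: the only ℂ-subspaces of F̃ invariant under all the operators G⁺(i−1/2) = −i·Ψ⁺(i−1/2) and G⁻(i−1/2) = −(i+λ)Ψ⁻(i−1/2), i ∈ ℤ, are {0} and F̃. -/

import Mathlib

noncomputable section

/-- The fermionic Fock space `F`: it has basis indexed by pairs `(A, B)` of finite sets of
nonnegative integers, the pair `(A, B)` corresponding to the basis monomial
`Ψ⁺(−n₁−1/2)⋯Ψ⁺(−n_r−1/2)·Ψ⁻(−k₁−1/2)⋯Ψ⁻(−k_s−1/2)·𝟙` where `A = {n₁ > ⋯ > n_r}` and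
`B = {k₁ > ⋯ > k_s}`. -/
abbrev FockF : Type := (Finset ℕ × Finset ℕ) →₀ ℂ

/-- The vacuum vector `𝟙`. -/
def vac : FockF := Finsupp.single (∅, ∅) 1

/-- `(−1)^{#{a ∈ S : a > m}}`. -/
def sgn (S : Finset ℕ) (m : ℕ) : ℂ := (-1 : ℂ) ^ (S.filter fun a => m < a).card

/-- `Ψ⁺(−m−1/2)`: exterior multiplication (creation). -/
def psiPneg (m : ℕ) : Module.End ℂ FockF :=
  Finsupp.lsum ℂ fun AB : Finset ℕ × Finset ℕ => LinearMap.toSpanSingleton ℂ FockF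
    (if m ∈ AB.1 then 0 else sgn AB.1 m • Finsupp.single (insert m AB.1, AB.2) 1)

/-- `Ψ⁺(m+1/2)`: the odd contraction operator pairing with `Ψ⁻(−m−1/2)` (annihilation). -/
def psiPpos (m : ℕ) : Module.End ℂ FockF :=
  Finsupp.lsum ℂ fun AB : Finset ℕ × Finset ℕ => LinearMap.toSpanSingleton ℂ FockF
    (if m ∈ AB.2 then ((-1 : ℂ) ^ AB.1.card * sgn AB.2 m) • Finsupp.single (AB.1, AB.2.erase m) 1
     else 0)

/-- `Ψ⁻(−m−1/2)`: exterior multiplication (creation). -/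
def psiMneg (m : ℕ) : Module.End ℂ FockF :=
  Finsupp.lsum ℂ fun AB : Finset ℕ × Finset ℕ => LinearMap.toSpanSingleton ℂ FockF
    (if m ∈ AB.2 then 0
     else ((-1 : ℂ) ^ AB.1.card * sgn AB.2 m) • Finsupp.single (AB.1, insert m AB.2) 1)

/-- `Ψ⁻(m+1/2)`: the odd contraction operator pairing with `Ψ⁺(−m−1/2)` (annihilation). -/
def psiMpos (m : ℕ) : Module.End ℂ FockF :=
  Finsupp.lsum ℂ fun AB : Finset ℕ × Finset ℕ => LinearMap.toSpanSingleton ℂ FockF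
    (if m ∈ AB.1 then sgn AB.1 m • Finsupp.single (AB.1.erase m, AB.2) 1 else 0)

/-- `PsiP i` is the operator `Ψ⁺(i − 1/2)`, `i ∈ ℤ`. -/
def PsiP (i : ℤ) : Module.End ℂ FockF :=
  if i ≤ 0 then psiPneg (-i).toNat else psiPpos (i - 1).toNat

/-- `PsiM i` is the operator `Ψ⁻(i − 1/2)`, `i ∈ ℤ`. -/
def PsiM (i : ℤ) : Module.End ℂ FockF :=
  if i ≤ 0 then psiMneg (-i).toNat else psiMpos (i - 1).toNat

/-- `G⁺(i−1/2) = (λ − i)·Ψ⁺(i−1/2)`. -/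
def Gplus (lam : ℂ) (i : ℤ) : Module.End ℂ FockF := (lam - (i : ℂ)) • PsiP i

/-- The finite set of indices `k ≥ −p` for which `Ψ⁻(k+i−1/2)` can act nontrivially on the
basis monomial `AB`; outside of it all terms of the locally finite sum defining `G⁻` vanish. -/
def GminusIdx (p : ℕ) (i : ℤ) (AB : Finset ℕ × Finset ℕ) : Finset ℤ :=
  (Finset.Icc (-(p : ℤ)) (-i) ∪ AB.1.image fun a : ℕ => (a : ℤ) + 1 - i).filter
    fun k => -(p : ℤ) ≤ k

/-- `G⁻(i−1/2) = −i·Ψ⁻(i−1/2) + Σ_{k=−p}^∞ χ_{−k}·Ψ⁻(k+i−1/2)` (a locally finite sum). -/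
def Gminus (p : ℕ) (χ : ℤ → ℂ) (i : ℤ) : Module.End ℂ FockF :=
  (-(i : ℂ)) • PsiM i +
    Finsupp.lsum ℂ fun AB : Finset ℕ × Finset ℕ => LinearMap.toSpanSingleton ℂ FockF
      (∑ k ∈ GminusIdx p i AB, χ (-k) • PsiM (k + i) (Finsupp.single AB 1))

end

/-!
On a basis monomial the products `Ψ⁺(−m−1/2)Ψ⁻(m+1/2)` and `Ψ⁻(−m−1/2)Ψ⁺(m+1/2)` are the
occupation-number operators of the mode `m`, hence projections onto spans of monomials. A subspace
stable under all of them contains every monomial occurring in one of its vectors; annihilating the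
factors of such a monomial produces the vacuum, and the vacuum generates. On `F̃` the mode
`Ψ⁺(−1/2)` is absent, so the argument never needs `Ψ⁺(−1/2)` or `Ψ⁻(1/2)`, that is `Ψ⁺(i−1/2)` at
`i = 0` and `Ψ⁻(i−1/2)` at `i = 1`. Away from these indices the scalars `−i` and `−(i+λ)` are
nonzero: an integer `λ` can only be `−1`.
-/

theorem single_apply_mem_of_filter_mem {α M : Type*} [AddCommGroup M]
    (U : AddSubgroup (α →₀ M))
    (hsep : ∀ x y, x ≠ y → ∃ (p : α → Prop) (_ : DecidablePred p),
      (∀ v ∈ U, v.filter p ∈ U) ∧ ¬(p x ↔ p y))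
    {v : α →₀ M} (hv : v ∈ U) (x : α) : Finsupp.single x (v x) ∈ U := by
  classical
  induction hn : v.support.card using Nat.strong_induction_on generalizing v with
  | _ n ih =>
    subst hn
    by_cases hsupp : ∀ y, v y ≠ 0 → y = x
    · rwa [← Finsupp.filter_eq', (Finsupp.filter_eq_self_iff _ v).2 hsupp]
    push Not at hsupp
    obtain ⟨y, hy, hyx⟩ := hsupp
    -- Filtering by a predicate true at `x` and false at `y` keeps `v x` and shrinks the support.
    obtain ⟨q, _, hqU, hqx, hqy⟩ : ∃ (q : α → Prop) (_ : DecidablePred q),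
        v.filter q ∈ U ∧ q x ∧ ¬q y := by
      obtain ⟨p, _, hpU, hpxy⟩ := hsep x y hyx.symm
      by_cases hpx : p x
      · exact ⟨p, inferInstance, hpU v hv, hpx, by tauto⟩
      · refine ⟨(¬p ·), inferInstance, ?_, hpx, by tauto⟩
        rw [eq_sub_of_add_eq' (Finsupp.filter_add_filter_not v p)]
        exact U.sub_mem hv (hpU v hv)
    have hcard : (v.filter q).support.card < v.support.card := by
      rw [Finsupp.support_filter]
      exact Finset.card_lt_card
        (Finset.filter_ssubset.2 ⟨y, Finsupp.mem_support_iff.2 hy, hqy⟩)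
    simpa only [Finsupp.filter_apply_pos q v hqx] using ih _ hcard hqU rfl

theorem sgn_mul_self (S : Finset ℕ) (m : ℕ) : sgn S m * sgn S m = 1 :=
  pow_mul_pow_eq_one _ (by norm_num)

theorem sgn_ne_zero (S : Finset ℕ) (m : ℕ) : sgn S m ≠ 0 :=
  left_ne_zero_of_mul_eq_one (sgn_mul_self S m)

theorem neg_one_pow_mul_sgn_mul_self (k : ℕ) (S : Finset ℕ) (m : ℕ) :
    ((-1) ^ k * sgn S m) * ((-1) ^ k * sgn S m) = 1 := by
  rw [mul_mul_mul_comm, sgn_mul_self, pow_mul_pow_eq_one _ (by norm_num), one_mul]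

theorem neg_one_pow_mul_sgn_ne_zero (k : ℕ) (S : Finset ℕ) (m : ℕ) : (-1) ^ k * sgn S m ≠ 0 :=
  left_ne_zero_of_mul_eq_one (neg_one_pow_mul_sgn_mul_self k S m)

theorem sgn_erase_self (S : Finset ℕ) (m : ℕ) : sgn (S.erase m) m = sgn S m := by
  rw [sgn, sgn, Finset.filter_erase, Finset.erase_eq_of_notMem (by simp)]

section Monomials

variable (m : ℕ) (A B : Finset ℕ) (c : ℂ)

theorem psiPneg_single : psiPneg m (Finsupp.single (A, B) c) =
    if m ∈ A then 0 else sgn A m • Finsupp.single (insert m A, B) c := by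
  rw [psiPneg, Finsupp.lsum_single, LinearMap.toSpanSingleton_apply]
  split_ifs
  · rw [smul_zero]
  · rw [smul_comm, Finsupp.smul_single_one]

theorem psiMpos_single : psiMpos m (Finsupp.single (A, B) c) =
    if m ∈ A then sgn A m • Finsupp.single (A.erase m, B) c else 0 := by
  rw [psiMpos, Finsupp.lsum_single, LinearMap.toSpanSingleton_apply]
  split_ifs
  · rw [smul_comm, Finsupp.smul_single_one]
  · rw [smul_zero]

theorem psiMneg_single : psiMneg m (Finsupp.single (A, B) c) =
    if m ∈ B then 0 else ((-1) ^ A.card * sgn B m) • Finsupp.single (A, insert m B) c := by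
  rw [psiMneg, Finsupp.lsum_single, LinearMap.toSpanSingleton_apply]
  split_ifs
  · rw [smul_zero]
  · rw [smul_comm, Finsupp.smul_single_one]

theorem psiPpos_single : psiPpos m (Finsupp.single (A, B) c) =
    if m ∈ B then ((-1) ^ A.card * sgn B m) • Finsupp.single (A, B.erase m) c else 0 := by
  rw [psiPpos, Finsupp.lsum_single, LinearMap.toSpanSingleton_apply]
  split_ifs
  · rw [smul_comm, Finsupp.smul_single_one]
  · rw [smul_zero]

end Monomials

theorem psiPneg_psiMpos (m : ℕ) (v : FockF) :
    psiPneg m (psiMpos m v) = v.filter fun AB => m ∈ AB.1 := by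
  induction v using Finsupp.induction_linear with
  | zero => simp only [map_zero, Finsupp.filter_zero]
  | add v w hv hw => rw [map_add, map_add, hv, hw, Finsupp.filter_add]
  | single AB c =>
    obtain ⟨A, B⟩ := AB
    by_cases hm : m ∈ A
    · rw [Finsupp.filter_single_of_pos _ (by exact hm), psiMpos_single, if_pos hm, map_smul,
        psiPneg_single, if_neg (Finset.notMem_erase m A), sgn_erase_self, Finset.insert_erase hm,
        smul_smul, sgn_mul_self, one_smul]
    · rw [Finsupp.filter_single_of_neg _ (by exact hm), psiMpos_single, if_neg hm, map_zero]

theorem psiMneg_psiPpos (m : ℕ) (v : FockF) :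
    psiMneg m (psiPpos m v) = v.filter fun AB => m ∈ AB.2 := by
  induction v using Finsupp.induction_linear with
  | zero => simp only [map_zero, Finsupp.filter_zero]
  | add v w hv hw => rw [map_add, map_add, hv, hw, Finsupp.filter_add]
  | single AB c =>
    obtain ⟨A, B⟩ := AB
    by_cases hm : m ∈ B
    · rw [Finsupp.filter_single_of_pos _ (by exact hm), psiPpos_single, if_pos hm, map_smul,
        psiMneg_single, if_neg (Finset.notMem_erase m B), sgn_erase_self, Finset.insert_erase hm,
        smul_smul, neg_one_pow_mul_sgn_mul_self, one_smul]
    · rw [Finsupp.filter_single_of_neg _ (by exact hm), psiPpos_single, if_neg hm, map_zero]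

/-- The Fock space on a restricted set of modes: the span of the monomials all of whose
`Ψ⁺`-indices lie in `s` and all of whose `Ψ⁻`-indices lie in `t`. The space `F̃` is the case
`s = {0}ᶜ`, `t = univ`. -/
def modeFock (s t : Set ℕ) : Submodule ℂ FockF :=
  Finsupp.supported ℂ ℂ {AB | ↑AB.1 ⊆ s ∧ ↑AB.2 ⊆ t}

theorem ker_psiMpos (m : ℕ) : LinearMap.ker (psiMpos m) = modeFock {m}ᶜ Set.univ := by
  apply le_antisymm
  · intro v hv
    have hfilter : v.filter (fun AB => m ∈ AB.1) = 0 := by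
      rw [← psiPneg_psiMpos, LinearMap.mem_ker.1 hv, map_zero]
    refine (Finsupp.mem_supported' ℂ v).2 fun AB hAB => ?_
    exact (Finsupp.filter_eq_zero_iff _ v).1 hfilter AB (by simpa using hAB)
  · rw [modeFock, Finsupp.supported_eq_span_single, Submodule.span_le]
    rintro _ ⟨⟨A, B⟩, ⟨hA, -⟩, rfl⟩
    rw [SetLike.mem_coe, LinearMap.mem_ker, psiMpos_single, if_neg (by simpa using hA)]

/-- Stability of a subspace under the Clifford algebra generated by the modes `Ψ⁺(−m−1/2)`,
`Ψ⁻(m+1/2)` for `m ∈ s` and `Ψ⁻(−m−1/2)`, `Ψ⁺(m+1/2)` for `m ∈ t`. -/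
structure IsCliffordStable (s t : Set ℕ) (U : Submodule ℂ FockF) : Prop where
  psiPneg_mem : ∀ {m}, m ∈ s → ∀ {v}, v ∈ U → psiPneg m v ∈ U
  psiMpos_mem : ∀ {m}, m ∈ s → ∀ {v}, v ∈ U → psiMpos m v ∈ U
  psiMneg_mem : ∀ {m}, m ∈ t → ∀ {v}, v ∈ U → psiMneg m v ∈ U
  psiPpos_mem : ∀ {m}, m ∈ t → ∀ {v}, v ∈ U → psiPpos m v ∈ U

namespace IsCliffordStable

variable {s t : Set ℕ} {U : Submodule ℂ FockF}

theorem filter_fst_mem (h : IsCliffordStable s t U) (hU : U ≤ modeFock s t) (m : ℕ)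
    {v : FockF} (hv : v ∈ U) : v.filter (fun AB => m ∈ AB.1) ∈ U := by
  by_cases hm : m ∈ s
  · rw [← psiPneg_psiMpos]
    exact h.psiPneg_mem hm (h.psiMpos_mem hm hv)
  · have hzero : v.filter (fun AB => m ∈ AB.1) = 0 :=
      (Finsupp.filter_eq_zero_iff _ v).2 fun AB hAB =>
        (Finsupp.mem_supported' ℂ v).1 (hU hv) AB fun hAB' => hm (hAB'.1 hAB)
    exact hzero ▸ U.zero_mem

theorem filter_snd_mem (h : IsCliffordStable s t U) (hU : U ≤ modeFock s t) (m : ℕ)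
    {v : FockF} (hv : v ∈ U) : v.filter (fun AB => m ∈ AB.2) ∈ U := by
  by_cases hm : m ∈ t
  · rw [← psiMneg_psiPpos]
    exact h.psiMneg_mem hm (h.psiPpos_mem hm hv)
  · have hzero : v.filter (fun AB => m ∈ AB.2) = 0 :=
      (Finsupp.filter_eq_zero_iff _ v).2 fun AB hAB =>
        (Finsupp.mem_supported' ℂ v).1 (hU hv) AB fun hAB' => hm (hAB'.2 hAB)
    exact hzero ▸ U.zero_mem

theorem single_apply_mem (h : IsCliffordStable s t U) (hU : U ≤ modeFock s t)
    {v : FockF} (hv : v ∈ U) (AB : Finset ℕ × Finset ℕ) : Finsupp.single AB (v AB) ∈ U := by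
  refine single_apply_mem_of_filter_mem U.toAddSubgroup (fun AB CD hne => ?_) hv AB
  obtain ⟨m, hm⟩ | ⟨m, hm⟩ :
      (∃ m, ¬(m ∈ AB.1 ↔ m ∈ CD.1)) ∨ ∃ m, ¬(m ∈ AB.2 ↔ m ∈ CD.2) := by
    simpa only [ne_eq, Prod.ext_iff, Finset.ext_iff, not_and_or, not_forall] using hne
  · exact ⟨fun AB => m ∈ AB.1, inferInstance, fun _ => h.filter_fst_mem hU m, hm⟩
  · exact ⟨fun AB => m ∈ AB.2, inferInstance, fun _ => h.filter_snd_mem hU m, hm⟩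

theorem single_insert_fst_mem_iff (h : IsCliffordStable s t U) {m : ℕ} (hm : m ∈ s)
    {A : Finset ℕ} (hA : m ∉ A) (B : Finset ℕ) (c : ℂ) :
    Finsupp.single (insert m A, B) c ∈ U ↔ Finsupp.single (A, B) c ∈ U := by
  constructor <;> intro hmem
  · have hact := h.psiMpos_mem hm hmem
    rwa [psiMpos_single, if_pos (Finset.mem_insert_self m A), Finset.erase_insert hA,
      U.smul_mem_iff (sgn_ne_zero _ _)] at hact
  · have hact := h.psiPneg_mem hm hmem
    rwa [psiPneg_single, if_neg hA, U.smul_mem_iff (sgn_ne_zero _ _)] at hact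

theorem single_insert_snd_mem_iff (h : IsCliffordStable s t U) {m : ℕ} (hm : m ∈ t)
    (A : Finset ℕ) {B : Finset ℕ} (hB : m ∉ B) (c : ℂ) :
    Finsupp.single (A, insert m B) c ∈ U ↔ Finsupp.single (A, B) c ∈ U := by
  constructor <;> intro hmem
  · have hact := h.psiPpos_mem hm hmem
    rwa [psiPpos_single, if_pos (Finset.mem_insert_self m B), Finset.erase_insert hB,
      U.smul_mem_iff (neg_one_pow_mul_sgn_ne_zero _ _ _)] at hact
  · have hact := h.psiMneg_mem hm hmem
    rwa [psiMneg_single, if_neg hB, U.smul_mem_iff (neg_one_pow_mul_sgn_ne_zero _ _ _)] at hact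

theorem single_mem_iff_vac_mem (h : IsCliffordStable s t U) {A B : Finset ℕ}
    (hA : ↑A ⊆ s) (hB : ↑B ⊆ t) : Finsupp.single (A, B) 1 ∈ U ↔ vac ∈ U := by
  induction A using Finset.induction_on with
  | empty =>
    induction B using Finset.induction_on with
    | empty => rfl
    | insert m B hm ih =>
      rw [Finset.coe_insert, Set.insert_subset_iff] at hB
      rw [h.single_insert_snd_mem_iff hB.1 _ hm, ih hB.2]
  | insert m A hm ih =>
    rw [Finset.coe_insert, Set.insert_subset_iff] at hA
    rw [h.single_insert_fst_mem_iff hA.1 hm, ih hA.2]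

theorem vac_mem (h : IsCliffordStable s t U) (hU : U ≤ modeFock s t) (hne : U ≠ ⊥) :
    vac ∈ U := by
  obtain ⟨v, hv, hv0⟩ := U.ne_bot_iff.1 hne
  obtain ⟨⟨A, B⟩, hAB⟩ := Finsupp.ne_iff.1 hv0
  obtain ⟨hA, hB⟩ := show ↑A ⊆ s ∧ ↑B ⊆ t from hU hv (Finsupp.mem_support_iff.2 hAB)
  have hsingle := h.single_apply_mem hU hv (A, B)
  rw [← Finsupp.smul_single_one, U.smul_mem_iff hAB] at hsingle
  exact (h.single_mem_iff_vac_mem hA hB).1 hsingle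

theorem modeFock_le (h : IsCliffordStable s t U) (hvac : vac ∈ U) : modeFock s t ≤ U := by
  rw [modeFock, Finsupp.supported_eq_span_single, Submodule.span_le]
  rintro _ ⟨⟨A, B⟩, ⟨hA, hB⟩, rfl⟩
  exact (h.single_mem_iff_vac_mem hA hB).2 hvac

theorem eq_bot_or_eq_modeFock (h : IsCliffordStable s t U) (hU : U ≤ modeFock s t) :
    U = ⊥ ∨ U = modeFock s t :=
  or_iff_not_imp_left.2 fun hne => hU.antisymm (h.modeFock_le (h.vac_mem hU hne))

end IsCliffordStable

theorem PsiP_neg_natCast (m : ℕ) : PsiP (-m) = psiPneg m := by simp [PsiP]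

theorem PsiP_natCast_add_one (m : ℕ) : PsiP (m + 1) = psiPpos m := by
  simp [PsiP, show ¬(m + 1 : ℤ) ≤ 0 by lia]

theorem PsiM_neg_natCast (m : ℕ) : PsiM (-m) = psiMneg m := by simp [PsiM]

theorem PsiM_natCast_add_one (m : ℕ) : PsiM (m + 1) = psiMpos m := by
  simp [PsiM, show ¬(m + 1 : ℤ) ≤ 0 by lia]

theorem ker_PsiM_one : LinearMap.ker (PsiM 1) = modeFock {0}ᶜ Set.univ := by
  simpa using (PsiM_natCast_add_one 0).symm ▸ ker_psiMpos 0

theorem isCliffordStable_of_PsiP_PsiM_mem {U : Submodule ℂ FockF}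
    (hP : ∀ i ≠ 0, ∀ v ∈ U, PsiP i v ∈ U) (hM : ∀ i ≠ 1, ∀ v ∈ U, PsiM i v ∈ U) :
    IsCliffordStable {0}ᶜ Set.univ U where
  psiPneg_mem {m} hm v hv := PsiP_neg_natCast m ▸ hP (-m) (by simpa using hm) v hv
  psiMpos_mem {m} hm v hv := PsiM_natCast_add_one m ▸ hM (m + 1) (by simpa using hm) v hv
  psiMneg_mem {m} _ v hv := PsiM_neg_natCast m ▸ hM (-m) (by lia) v hv
  psiPpos_mem {m} _ v hv := PsiP_natCast_add_one m ▸ hP (m + 1) (by lia) v hv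

theorem intCast_add_ne_zero {lam : ℂ} (hlam : (∀ n : ℤ, lam ≠ n) ∨ lam = -1) {i : ℤ}
    (hi : i ≠ 1) : (i : ℂ) + lam ≠ 0 := by
  intro h
  obtain hint | rfl := hlam
  · exact hint (-i) (by rw [Int.cast_neg]; exact eq_neg_of_add_eq_zero_right h)
  · exact hi (by exact_mod_cast add_neg_eq_zero.1 h)

/-- Assume `λ ∈ ℂ \ ℤ` or `λ = −1`.  Then `F̃_{−λ/z}` is irreducible: the
only `ℂ`-subspaces of `F̃ = Ker_F Ψ⁻(1/2)` invariant under all the operators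
`G⁺(i−1/2) = −i·Ψ⁺(i−1/2)` and `G⁻(i−1/2) = −(i+λ)·Ψ⁻(i−1/2)`, `i ∈ ℤ`, are `{0}` and `F̃`. -/
theorem statement6 (lam : ℂ) (hlam : (∀ n : ℤ, lam ≠ (n : ℂ)) ∨ lam = -1)
    (U : Submodule ℂ FockF) (hsub : U ≤ LinearMap.ker (PsiM 1))
    (hU : ∀ i : ℤ, ∀ v ∈ U,
      ((-(i : ℂ)) • PsiP i) v ∈ U ∧ ((-((i : ℂ) + lam)) • PsiM i) v ∈ U) :
    U = ⊥ ∨ U = LinearMap.ker (PsiM 1) := by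
  rw [ker_PsiM_one] at hsub ⊢
  refine (isCliffordStable_of_PsiP_PsiM_mem (fun i hi v hv => ?_)
    fun i hi v hv => ?_).eq_bot_or_eq_modeFock hsub
  · have hi' : -(i : ℂ) ≠ 0 := neg_ne_zero.2 (Int.cast_ne_zero.2 hi)
    exact (U.smul_mem_iff hi').1 (hU i v hv).1
  · have hi' : -((i : ℂ) + lam) ≠ 0 := neg_ne_zero.2 (intCast_add_ne_zero hlam hi)
    exact (U.smul_mem_iff hi').1 (hU i v hv).2
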